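/- arXiv:1311.0539 — 5 statements merged into one kernel-verified Lean document; each statement's English description precedes it below -/
import Mathlib

section
/- Let H be a graph with k ≥ 1 edges, no isolated vertices, and vertex cover number τ = τ(H). Then there exists an H-good graph with at most (τ+1)·k edges. -/
open SimpleGraph

/-- A proper edge coloring of `G`: adjacent (distinct, vertex-sharing) edges get
different colors. -/
def IsProperEdgeColoring {V : Type*} (G : SimpleGraph V) (c : Sym2 V → ℕ) : Prop :=
  ∀ e₁ ∈ G.edgeSet, ∀ e₂ ∈ G.edgeSet, e₁ ≠ e₂ → (∃ v, v ∈ e₁ ∧ v ∈ e₂) → c e₁ ≠ c e₂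

/-- `G` contains a rainbow copy of `H` with respect to the edge coloring `c`:
there is an injective graph homomorphism `H → G` whose image edges receive
pairwise distinct colors. -/
def HasRainbowCopy {V W : Type*} (G : SimpleGraph V) (H : SimpleGraph W) (c : Sym2 V → ℕ) : Prop :=
  ∃ f : H →g G, Function.Injective f ∧
    ∀ e₁ ∈ H.edgeSet, ∀ e₂ ∈ H.edgeSet, c (Sym2.map f e₁) = c (Sym2.map f e₂) → e₁ = e₂

/-- `G → H`: every proper edge coloring of `G` contains a rainbow copy of `H`. -/
def ArrowsTo {V W : Type*} (G : SimpleGraph V) (H : SimpleGraph W) : Prop :=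
  ∀ c : Sym2 V → ℕ, IsProperEdgeColoring G c → HasRainbowCopy G H c

/-- The size anti-Ramsey number: the minimum number of edges of a (finite) graph
`G` with `G → H`. -/
noncomputable def ARs {W : Type*} (H : SimpleGraph W) : ℕ :=
  sInf {m | ∃ (n : ℕ) (G : SimpleGraph (Fin n)), ArrowsTo G H ∧ G.edgeSet.ncard = m}

/-- The local anti-Ramsey number: the minimum `n` such that `K_n → H`. -/
noncomputable def ARloc {W : Type*} (H : SimpleGraph W) : ℕ :=
  sInf {n | ArrowsTo (⊤ : SimpleGraph (Fin n)) H}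

/-- The vertex cover number of `H`: the minimum size of a set of vertices
meeting every edge of `H`. -/
noncomputable def coverNumber {W : Type*} (H : SimpleGraph W) : ℕ :=
  sInf {m | ∃ S : Set W, S.Finite ∧ S.ncard = m ∧ ∀ e ∈ H.edgeSet, ∃ v ∈ S, v ∈ e}

/-- An `H`-good coloring of `G`: a proper edge coloring with colors in the
positive integers that contains a rainbow copy of `H`, and such that every edge
of color `i` has, for each `1 ≤ j < i`, an adjacent edge of color `j`. -/
def IsHGoodColoring {V W : Type*} (H : SimpleGraph W) (G : SimpleGraph V)
    (c : Sym2 V → ℕ) : Prop :=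
  IsProperEdgeColoring G c ∧
  (∀ e ∈ G.edgeSet, 1 ≤ c e) ∧
  HasRainbowCopy G H c ∧
  ∀ e ∈ G.edgeSet, ∀ j : ℕ, 1 ≤ j → j < c e →
    ∃ e' ∈ G.edgeSet, c e' = j ∧ ∃ v, v ∈ e ∧ v ∈ e'

/-- A graph `G` is `H`-good if it admits an `H`-good coloring. -/
def HGood {V W : Type*} (H : SimpleGraph W) (G : SimpleGraph V) : Prop :=
  ∃ c : Sym2 V → ℕ, IsHGoodColoring H G c

/-- `H` with pendant edges: leaf `(v, e)` is attached to `v ∈ S` whenever `v ∉ e`. -/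
def pendG {W : Type} (H : SimpleGraph W) (S : Set W) : SimpleGraph (W ⊕ (W × H.edgeSet)) where
  Adj x y := match x, y with
    | .inl a, .inl b => H.Adj a b
    | .inl a, .inr p => a = p.1 ∧ a ∈ S ∧ a ∉ p.2.1
    | .inr p, .inl a => a = p.1 ∧ a ∈ S ∧ a ∉ p.2.1
    | .inr _, .inr _ => False
  symm := ⟨by
    rintro (a | p) (b | q) h
    · exact H.adj_symm h
    · exact h
    · exact h
    · exact h⟩
  loopless := ⟨by
    rintro (a | p) h
    · exact H.loopless.irrefl a h
    · exact h⟩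

def pendF {W : Type} (H : SimpleGraph W) (c : Sym2 W → ℕ) :
    W ⊕ (W × H.edgeSet) → W ⊕ (W × H.edgeSet) → ℕ
  | .inl a, .inl b => c s(a, b)
  | .inl _, .inr p => c p.2.1
  | .inr p, .inl _ => c p.2.1
  | .inr _, .inr _ => 0

def pendC {W : Type} (H : SimpleGraph W) (c : Sym2 W → ℕ) : Sym2 (W ⊕ (W × H.edgeSet)) → ℕ :=
  Sym2.lift ⟨pendF H c, by
    rintro (a | p) (b | q) <;> simp [pendF, Sym2.eq_swap]⟩

lemma pend_good {W : Type} (H : SimpleGraph W) (S : Set W) (c : Sym2 W → ℕ) (k : ℕ)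
    (hS : ∀ e ∈ H.edgeSet, ∃ v ∈ S, v ∈ e)
    (hinj : ∀ e₁ ∈ H.edgeSet, ∀ e₂ ∈ H.edgeSet, c e₁ = c e₂ → e₁ = e₂)
    (hr : ∀ e ∈ H.edgeSet, 1 ≤ c e ∧ c e ≤ k)
    (hs : ∀ j, 1 ≤ j → j ≤ k → ∃ e ∈ H.edgeSet, c e = j) :
    IsHGoodColoring H (pendG H S) (pendC H c) := by
  have hrange : ∀ e ∈ (pendG H S).edgeSet, 1 ≤ pendC H c e ∧ pendC H c e ≤ k := by
    intro e
    induction e with | _ x y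
    rcases x with a | p <;> rcases y with b | q <;> intro h
    · exact hr _ h
    · exact hr _ q.2.2
    · exact hr _ p.2.2
    · exact h.elim
  refine ⟨?_, fun e he => (hrange e he).1, ?_, ?_⟩
  · rintro e₁ h₁ e₂ h₂ hne ⟨x, hx₁, hx₂⟩ heq
    obtain ⟨y, rfl⟩ := hx₁
    obtain ⟨z, rfl⟩ := hx₂
    apply hne
    rcases x with a | p <;> rcases y with b | q <;> rcases z with d | r
    · have := hinj _ h₁ _ h₂ heq
      simp at this
      rcases this with rfl | ⟨rfl, rfl⟩ <;> rfl
    · have := hinj _ h₁ _ r.2.2 heq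
      exact absurd (this ▸ Sym2.mem_mk_left a b) h₂.2.2
    · have := hinj _ q.2.2 _ h₂ heq
      exact absurd (this ▸ Sym2.mem_mk_left a d) h₁.2.2
    · have := hinj _ q.2.2 _ r.2.2 heq
      have h3 : q = r := Prod.ext (h₁.1.symm.trans h₂.1) (Subtype.ext this)
      rw [h3]
    · rw [h₁.1.trans h₂.1.symm]
    · exact h₂.elim
    · exact h₁.elim
    · exact h₁.elim
  · refine ⟨⟨Sum.inl, fun h => h⟩, Sum.inl_injective, ?_⟩
    intro e₁ h₁ e₂ h₂ h
    apply hinj _ h₁ _ h₂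
    induction e₁ with | _ a b
    induction e₂ with | _ a' b'
    exact h
  · intro e he j hj hlt
    have hjk : j ≤ k := hlt.le.trans (hrange e he).2
    obtain ⟨v, hv, hve⟩ : ∃ v ∈ S, Sum.inl v ∈ e := by
      induction e with | _ x y
      rcases x with a | p <;> rcases y with b | q
      · obtain ⟨v, hv, h⟩ := hS s(a, b) he
        refine ⟨v, hv, ?_⟩
        simpa using h
      · exact ⟨a, he.2.1, Sym2.mem_mk_left _ _⟩
      · exact ⟨b, he.2.1, Sym2.mem_mk_right _ _⟩
      · exact he.elim
    obtain ⟨f, hf, hfj⟩ := hs j hj hjk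
    by_cases hvf : v ∈ f
    · obtain ⟨w, rfl⟩ := hvf
      exact ⟨s(.inl v, .inl w), hf, hfj, .inl v, hve, Sym2.mem_mk_left _ _⟩
    · exact ⟨s(.inl v, .inr (v, ⟨f, hf⟩)), ⟨rfl, hv, hvf⟩, hfj, .inl v, hve, Sym2.mem_mk_left _ _⟩

lemma pend_card {W : Type} [Fintype W] (H : SimpleGraph W) (S : Set W) :
    (pendG H S).edgeSet.ncard ≤ (S.ncard + 1) * H.edgeSet.ncard := by
  have hsub : (pendG H S).edgeSet ⊆ (Sym2.map Sum.inl '' H.edgeSet) ∪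
      ((fun p : W × H.edgeSet => s(Sum.inl p.1, Sum.inr p)) '' (S ×ˢ Set.univ)) := by
    intro e
    induction e with | _ x y
    rcases x with a | p <;> rcases y with b | q <;> intro h
    · exact Or.inl ⟨s(a, b), h, rfl⟩
    · obtain ⟨rfl, h2, h3⟩ := h
      exact Or.inr ⟨q, ⟨h2, trivial⟩, rfl⟩
    · obtain ⟨rfl, h2, h3⟩ := h
      exact Or.inr ⟨p, ⟨h2, trivial⟩, Sym2.eq_swap⟩
    · exact h.elim
  refine (Set.ncard_le_ncard hsub (Set.toFinite _)).trans ((Set.ncard_union_le _ _).trans ?_)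
  have h1 := Set.ncard_image_le (f := Sym2.map (Sum.inl : W → W ⊕ (W × H.edgeSet)))
    (Set.toFinite H.edgeSet)
  have h2 := Set.ncard_image_le
    (f := fun p : W × H.edgeSet => (s(Sum.inl p.1, Sum.inr p) : Sym2 (W ⊕ (W × H.edgeSet))))
    (Set.toFinite (S ×ˢ Set.univ))
  rw [Set.ncard_prod, Set.ncard_univ, Nat.card_coe_set_eq] at h2
  linarith

lemma good_transfer {V V' W : Type} (H : SimpleGraph W) (G : SimpleGraph V) (f : V' ≃ V)
    (h : HGood H G) : HGood H (G.comap f) := by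
  have hm : ∀ e : Sym2 V', e ∈ (G.comap f).edgeSet ↔ e.map f ∈ G.edgeSet := by
    intro e
    induction e with | _ x y
    rfl
  obtain ⟨c, h1, h2, ⟨g, hg, hg'⟩, h4⟩ := h
  refine ⟨fun e => c (e.map f), ?_, ?_, ?_, ?_⟩
  · rintro e₁ he₁ e₂ he₂ hne ⟨v, hv₁, hv₂⟩
    exact h1 _ ((hm _).1 he₁) _ ((hm _).1 he₂) (fun h => hne (Sym2.map.injective f.injective h))
      ⟨f v, Sym2.mem_map.2 ⟨v, hv₁, rfl⟩, Sym2.mem_map.2 ⟨v, hv₂, rfl⟩⟩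
  · exact fun e he => h2 _ ((hm _).1 he)
  · refine ⟨⟨fun w => f.symm (g w), fun {a b} h => ?_⟩, fun a b h => hg (f.symm.injective h), ?_⟩
    · simpa using g.map_rel h
    · intro e₁ h₁ e₂ h₂ h
      apply hg' _ h₁ _ h₂
      induction e₁ with | _ a b
      induction e₂ with | _ a' b'
      simpa using h
  · intro e he j hj hlt
    obtain ⟨e', he', hc, v, hv, hv'⟩ := h4 _ ((hm _).1 he) j hj hlt
    have hmm : (e'.map f.symm).map f = e' := by
      rw [Sym2.map_map]; simp
    refine ⟨e'.map f.symm, (hm _).2 (by rwa [hmm]), by simpa only [hmm] using hc, f.symm v, ?_, ?_⟩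
    · obtain ⟨a, ha, rfl⟩ := Sym2.mem_map.1 hv
      simpa using ha
    · exact Sym2.mem_map.2 ⟨v, hv', rfl⟩

theorem stmt_13 {W : Type} [Fintype W] (H : SimpleGraph W)
    (hk : 1 ≤ H.edgeSet.ncard)
    (hiso : ∀ v : W, ∃ w, H.Adj v w) :
    ∃ (n : ℕ) (G : SimpleGraph (Fin n)), HGood H G ∧
      G.edgeSet.ncard ≤ (coverNumber H + 1) * H.edgeSet.ncard := by
  classical
  obtain ⟨S, -, hSc, hS⟩ : coverNumber H ∈ {m | ∃ S : Set W, S.Finite ∧ S.ncard = m ∧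
      ∀ e ∈ H.edgeSet, ∃ v ∈ S, v ∈ e} := by
    apply Nat.sInf_mem
    refine ⟨_, Set.univ, Set.toFinite _, rfl, fun e _ => ?_⟩
    induction e with | _ x y
    exact ⟨x, trivial, Sym2.mem_mk_left _ _⟩
  let φ : H.edgeSet ≃ Fin H.edgeSet.ncard := Finite.equivFinOfCardEq rfl
  let c : Sym2 W → ℕ := fun e => if h : e ∈ H.edgeSet then (φ ⟨e, h⟩).1 + 1 else 0
  have hgood : HGood H (pendG H S) := by
    refine ⟨_, pend_good H S c H.edgeSet.ncard hS ?_ ?_ ?_⟩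
    · intro e₁ h₁ e₂ h₂ h
      simp only [c, dif_pos h₁, dif_pos h₂] at h
      have := φ.injective (Fin.ext (Nat.succ.inj h))
      exact congrArg Subtype.val this
    · intro e he
      simp only [c, dif_pos he]
      have := (φ ⟨e, he⟩).2
      omega
    · intro j hj hjk
      refine ⟨(φ.symm ⟨j - 1, by omega⟩).1, (φ.symm ⟨j - 1, by omega⟩).2, ?_⟩
      simp only [c, dif_pos (φ.symm ⟨j - 1, by omega⟩).2]
      simp
      omega
  let f := (Finite.equivFin (W ⊕ (W × H.edgeSet))).symm
  refine ⟨_, (pendG H S).comap f, good_transfer H _ f hgood, ?_⟩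
  rw [← hSc]
  refine le_trans ?_ (pend_card H S)
  apply Set.ncard_le_ncard_of_injOn (Sym2.map f) _ (Sym2.map.injective f.injective).injOn
    (Set.toFinite _)
  intro e
  induction e with | _ x y
  exact fun h => h
end

section
/- For every k ≥ 1 there exists a P_k-good graph with at most k²/8 + 3k edges, where P_k denotes the path with k edges. -/
open SimpleGraph

/-- The relation "there is an edge `ab` with `a < b` and colour `k - u`". Vertices `0..k` form the
path, even vertices are the centres; vertices above `k` are leaves. -/
def EdgeRel (k a b u : ℕ) : Prop :=
  (b = a + 1 ∧ b ≤ k ∧ u = a) ∨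
  (a % 2 = 0 ∧ a + 2 ≤ b ∧ u = a + b + 1 ∧ u < k) ∨
  (k + 1 ≤ b ∧ a = 2 * ((b - (k + 1)) / 4) ∧ a < u ∧ u < k ∧
    (((b - (k + 1)) % 4 = 0 ∧ u + 2 = b - (k + 1)) ∨
     ((b - (k + 1)) % 4 ≠ 0 ∧ u + 1 = b - (k + 1))))

lemma EdgeRel.lt {k a b u : ℕ} (h : EdgeRel k a b u) : a < b ∧ u < k ∧ b < 2 * k + 3 := by
  unfold EdgeRel at h; omega

lemma EdgeRel.unique {k a b u u' : ℕ} (h : EdgeRel k a b u) (h' : EdgeRel k a b u') : u = u' := by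
  unfold EdgeRel at h h'; omega

lemma EdgeRel.proper {k a b a' b' u : ℕ} (h : EdgeRel k a b u) (h' : EdgeRel k a' b' u)
    (hs : a = a' ∨ a = b' ∨ b = a' ∨ b = b') : a = a' ∧ b = b' := by
  unfold EdgeRel at h h'
  rcases h with h | h | h <;> rcases h' with h' | h' | h' <;> rcases hs with hs | hs | hs | hs <;>
    omega

/-- even centre `a`, large `u` -/
lemma EdgeRel.mkBig {k a u : ℕ} (ha : a % 2 = 0) (hu : 2 * a + 3 ≤ u) (hk : u < k) :
    ∃ b, EdgeRel k a b u := ⟨u - a - 1, by unfold EdgeRel; omega⟩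

lemma EdgeRel.mkLeaf {k a u : ℕ} (ha : a % 2 = 0) (hau : a < u) (hk : u < k)
    (hu : u + 2 = 2 * a ∨ u = 2 * a ∨ u = 2 * a + 1 ∨ u = 2 * a + 2) :
    ∃ b, EdgeRel k a b u := by
  rcases hu with hu | hu
  · exact ⟨k + 1 + (u + 2), by unfold EdgeRel; omega⟩
  · exact ⟨k + 1 + (u + 1), by unfold EdgeRel; omega⟩

lemma EdgeRel.mkDown {k b u : ℕ} (h : (u + b) % 2 = 1) (hb : b + 1 ≤ u) (hu : u + 1 ≤ 2 * b)
    (hk : u < k) : ∃ a, EdgeRel k a b u := ⟨u - b - 1, by unfold EdgeRel; omega⟩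

lemma EdgeRel.cover {k a b u u' : ℕ} (h : EdgeRel k a b u) (hu : u < u') (hk : u' < k) :
    ∃ a' b', EdgeRel k a' b' u' ∧ (a = a' ∨ a = b' ∨ b = a' ∨ b = b') := by
  have big : ∀ x, (x = a ∨ x = b) → x % 2 = 0 → 2 * x + 3 ≤ u' →
      ∃ a' b', EdgeRel k a' b' u' ∧ (a = a' ∨ a = b' ∨ b = a' ∨ b = b') := by
    intro x hx h1 h2
    obtain ⟨y, hy⟩ := EdgeRel.mkBig h1 h2 hk
    exact ⟨x, y, hy, by omega⟩
  have leaf : ∀ x, (x = a ∨ x = b) → x % 2 = 0 → x < u' →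
      (u' + 2 = 2 * x ∨ u' = 2 * x ∨ u' = 2 * x + 1 ∨ u' = 2 * x + 2) →
      ∃ a' b', EdgeRel k a' b' u' ∧ (a = a' ∨ a = b' ∨ b = a' ∨ b = b') := by
    intro x hx h1 h2 h3
    obtain ⟨y, hy⟩ := EdgeRel.mkLeaf h1 h2 hk h3
    exact ⟨x, y, hy, by omega⟩
  have down : ∀ x, (x = a ∨ x = b) → (u' + x) % 2 = 1 → x + 1 ≤ u' → u' + 1 ≤ 2 * x →
      ∃ a' b', EdgeRel k a' b' u' ∧ (a = a' ∨ a = b' ∨ b = a' ∨ b = b') := by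
    intro x hx h1 h2 h3
    obtain ⟨y, hy⟩ := EdgeRel.mkDown h1 h2 h3 hk
    exact ⟨y, x, hy, by omega⟩
  rcases h with ⟨h1, h2, h3⟩ | h | h
  · by_cases ha : a % 2 = 0
    · by_cases c1 : 2 * a + 3 ≤ u'
      · exact big a (by omega) ha c1
      by_cases c2 : 2 * a ≤ u'
      · exact leaf a (by omega) ha (by omega) (by omega)
      by_cases c3 : u' % 2 = 1
      · exact down a (by omega) (by omega) (by omega) (by omega)
      · exact down b (by omega) (by omega) (by omega) (by omega)
    · by_cases c1 : 2 * b + 3 ≤ u'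
      · exact big b (by omega) (by omega) c1
      by_cases c2 : 2 * b ≤ u'
      · exact leaf b (by omega) (by omega) (by omega) (by omega)
      by_cases c3 : u' % 2 = 1
      · exact down b (by omega) (by omega) (by omega) (by omega)
      by_cases c4 : u' + 2 = 2 * b
      · by_cases c5 : b = 2
        · exact ⟨2, 3, by unfold EdgeRel; omega, by omega⟩
        · exact leaf b (by omega) (by omega) (by omega) (by omega)
      · exact down a (by omega) (by omega) (by omega) (by omega)
  · exact big a (by omega) (by omega) (by omega)
  · by_cases c1 : 2 * a + 3 ≤ u'
    · exact big a (by omega) (by omega) c1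
    by_cases c2 : 2 * a ≤ u'
    · exact leaf a (by omega) (by omega) (by omega) (by omega)
    · exact down a (by omega) (by omega) (by omega) (by omega)

/-- The good graph. -/
def goodG (k : ℕ) : SimpleGraph (Fin (2 * k + 3)) where
  Adj x y := ∃ u, EdgeRel k x y u ∨ EdgeRel k y x u
  symm := ⟨fun _ _ ⟨u, h⟩ => ⟨u, h.symm⟩⟩
  loopless := ⟨fun _ ⟨_, h⟩ => by rcases h with h | h <;> exact absurd h.lt.1 (lt_irrefl _)⟩

lemma goodG_edge {k : ℕ} (e : Sym2 (Fin (2 * k + 3))) :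
    e ∈ (goodG k).edgeSet ↔
      ∃ (a b : Fin (2 * k + 3)) (u : ℕ), e = s(a, b) ∧ EdgeRel k a b u := by
  constructor
  · induction e using Sym2.ind with
    | _ x y =>
      rintro ⟨u, h | h⟩
      · exact ⟨x, y, u, rfl, h⟩
      · exact ⟨y, x, u, Sym2.eq_swap, h⟩
  · rintro ⟨a, b, u, rfl, h⟩
    exact ⟨u, Or.inl h⟩

open Classical in
/-- The good colouring. -/
noncomputable def goodC (k : ℕ) (e : Sym2 (Fin (2 * k + 3))) : ℕ :=
  if h : ∃ (u : ℕ) (a b : Fin (2 * k + 3)), e = s(a, b) ∧ EdgeRel k a b u then k - h.choose else 0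

lemma goodC_eq {k u : ℕ} {a b : Fin (2 * k + 3)} (h : EdgeRel k a b u) :
    goodC k s(a, b) = k - u := by
  have hex : ∃ (u : ℕ) (a' b' : Fin (2 * k + 3)), s(a, b) = s(a', b') ∧ EdgeRel k a' b' u :=
    ⟨u, a, b, rfl, h⟩
  unfold goodC
  rw [dif_pos hex]
  obtain ⟨a', b', h1, h2⟩ := hex.choose_spec
  have h3 := h.lt
  have h4 := h2.lt
  rcases Sym2.eq_iff.1 h1 with ⟨rfl, rfl⟩ | ⟨rfl, rfl⟩
  · rw [h2.unique h]
  · omega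

lemma goodG_card (k : ℕ) :
    8 * (goodG k).edgeSet.ncard ≤ k ^ 2 + 17 * k := by
  let F : ℕ × ℕ → Sym2 (Fin (2 * k + 3)) := fun p => s(Fin.ofNat _ p.1, Fin.ofNat _ p.2)
  let T1 : Finset (ℕ × ℕ) := (Finset.range k).image fun a => (a, a + 1)
  let T2 : Finset (ℕ × ℕ) := ((Finset.range k).sigma fun u => Finset.range ((u + 1) / 4)).image
    fun p => (2 * p.2, p.1 - 1 - 2 * p.2)
  let T3 : Finset (ℕ × ℕ) := (Finset.Ico 2 (k + 2)).image fun w => (2 * (w / 4), k + 1 + w)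
  have hsub : (goodG k).edgeSet ⊆ (((T1 ∪ T2 ∪ T3).image F : Finset _) : Set _) := by
    intro e he
    obtain ⟨a, b, u, rfl, h⟩ := (goodG_edge e).1 he
    rw [Finset.mem_coe, Finset.mem_image]
    refine ⟨((a : ℕ), (b : ℕ)), ?_, by simp [F]⟩
    rw [Finset.mem_union, Finset.mem_union]
    rcases h with h | h | h
    · left; left
      exact Finset.mem_image.2 ⟨a, Finset.mem_range.2 (by omega), by rw [h.1]⟩
    · left; right
      refine Finset.mem_image.2 ⟨⟨u, a / 2⟩, Finset.mem_sigma.2 ⟨Finset.mem_range.2 h.2.2.2,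
        Finset.mem_range.2 ?_⟩, Prod.ext ?_ ?_⟩ <;> dsimp only <;> omega
    · right
      refine Finset.mem_image.2 ⟨b - (k + 1), Finset.mem_Ico.2 ?_, Prod.ext ?_ ?_⟩ <;>
        (try dsimp only) <;> omega
  have h1 : T1.card ≤ k := Finset.card_image_le.trans (by simp)
  have h3 : T3.card ≤ k := Finset.card_image_le.trans (by simp)
  have hsum : ∀ n, 8 * ∑ u ∈ Finset.range n, (u + 1) / 4 ≤ n ^ 2 + n := by
    intro n
    induction n with
    | zero => simp
    | succ n ih =>
      rw [Finset.sum_range_succ]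
      have : (n + 1) ^ 2 = n ^ 2 + 2 * n + 1 := by ring
      omega
  have h2 : T2.card ≤ ∑ u ∈ Finset.range k, (u + 1) / 4 :=
    Finset.card_image_le.trans (by simp)
  have h4 : (goodG k).edgeSet.ncard ≤ ((T1 ∪ T2 ∪ T3).image F).card := by
    rw [← Set.ncard_coe_finset]
    exact Set.ncard_le_ncard hsub (Finset.finite_toSet _)
  have h5 : ((T1 ∪ T2 ∪ T3).image F).card ≤ (T1 ∪ T2 ∪ T3).card := Finset.card_image_le
  have h6 := Finset.card_union_le (T1 ∪ T2) T3
  have h7 := Finset.card_union_le T1 T2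
  have h8 := hsum k
  omega

lemma path_edge {k : ℕ} (e : Sym2 (Fin (k + 1))) (he : e ∈ (pathGraph (k + 1)).edgeSet) :
    ∃ a b : Fin (k + 1), e = s(a, b) ∧ (b : ℕ) = a + 1 := by
  induction e using Sym2.ind with
  | _ x y =>
    rw [SimpleGraph.mem_edgeSet, pathGraph_adj] at he
    rcases he with h | h
    · exact ⟨x, y, rfl, h.symm⟩
    · exact ⟨y, x, Sym2.eq_swap, h.symm⟩

lemma good_isGood (k : ℕ) : IsHGoodColoring (pathGraph (k + 1)) (goodG k) (goodC k) := by
  refine ⟨?_, ?_, ?_, ?_⟩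
  · intro e₁ h₁ e₂ h₂ hne ⟨v, hv₁, hv₂⟩ hc
    obtain ⟨a, b, u, rfl, h⟩ := (goodG_edge _).1 h₁
    obtain ⟨a', b', u', rfl, h'⟩ := (goodG_edge _).1 h₂
    rw [goodC_eq h, goodC_eq h'] at hc
    have l1 := h.lt
    have l2 := h'.lt
    obtain rfl : u = u' := by omega
    rw [Sym2.mem_iff] at hv₁ hv₂
    have := h.proper h' (by
      rcases hv₁ with rfl | rfl <;> rcases hv₂ with rfl | rfl <;> simp)
    exact hne (by rw [Fin.ext this.1, Fin.ext this.2])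
  · intro e he
    obtain ⟨a, b, u, rfl, h⟩ := (goodG_edge _).1 he
    rw [goodC_eq h]
    have := h.lt
    omega
  · have key : ∀ a b : Fin (k + 1), (b : ℕ) = a + 1 →
        EdgeRel k (Fin.castLE (by omega : k + 1 ≤ 2 * k + 3) a)
          (Fin.castLE (by omega : k + 1 ≤ 2 * k + 3) b) a := by
      intro a b h
      have hb := b.isLt
      exact Or.inl ⟨h, Nat.lt_succ_iff.1 hb, rfl⟩
    refine ⟨⟨Fin.castLE (by omega), ?_⟩, Fin.castLE_injective (by omega), ?_⟩
    · intro a b hab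
      rw [pathGraph_adj] at hab
      rcases hab with h | h
      · exact ⟨_, Or.inl (key a b h.symm)⟩
      · exact ⟨_, Or.inr (key b a h.symm)⟩
    · intro e₁ h₁ e₂ h₂ hc
      obtain ⟨a, b, rfl, h⟩ := path_edge _ h₁
      obtain ⟨a', b', rfl, h'⟩ := path_edge _ h₂
      have e1 := goodC_eq (key a b h)
      have e2 := goodC_eq (key a' b' h')
      simp only [Sym2.map_mk] at hc
      have hc' : k - (a : ℕ) = k - (a' : ℕ) := by
        rw [← e1, ← e2]; exact hc
      have : (a : ℕ) = a' := by omega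
      rw [Fin.ext this, Fin.ext (by omega : (b : ℕ) = b')]
  · intro e he j hj hjc
    obtain ⟨a, b, u, rfl, h⟩ := (goodG_edge _).1 he
    rw [goodC_eq h] at hjc
    obtain ⟨a', b', h', hs⟩ := h.cover (u' := k - j) (by omega) (by omega)
    have l := h'.lt
    have h'' : EdgeRel k ((⟨a', by omega⟩ : Fin (2 * k + 3)) : ℕ)
      ((⟨b', by omega⟩ : Fin (2 * k + 3)) : ℕ) (k - j) := h'
    refine ⟨s(⟨a', by omega⟩, ⟨b', by omega⟩), (goodG_edge _).2 ⟨_, _, _, rfl, h''⟩, ?_, ?_⟩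
    · rw [goodC_eq h'']; omega
    · simp only [Sym2.mem_iff]
      rcases hs with hs | hs | hs | hs
      · exact ⟨a, Or.inl rfl, Or.inl (Fin.ext hs)⟩
      · exact ⟨a, Or.inl rfl, Or.inr (Fin.ext hs)⟩
      · exact ⟨b, Or.inr rfl, Or.inl (Fin.ext hs)⟩
      · exact ⟨b, Or.inr rfl, Or.inr (Fin.ext hs)⟩

theorem stmt_15 (k : ℕ) (hk : 1 ≤ k) :
    ∃ (n : ℕ) (G : SimpleGraph (Fin n)), HGood (SimpleGraph.pathGraph (k + 1)) G ∧
      (G.edgeSet.ncard : ℝ) ≤ (k : ℝ) ^ 2 / 8 + 3 * k := by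
  refine ⟨2 * k + 3, goodG k, ⟨goodC k, good_isGood k⟩, ?_⟩
  have h := goodG_card k
  have h' : (8 : ℝ) * ((goodG k).edgeSet.ncard : ℝ) ≤ (k : ℝ) ^ 2 + 17 * k := by exact_mod_cast h
  have : (0 : ℝ) ≤ k := Nat.cast_nonneg k
  linarith
end

section
/- For every k ≥ 3 there exists a C_k-good graph with at most k²/8 + 7k edges, where C_k denotes the cycle with k edges. -/
open SimpleGraph

/-- Oriented relation: the edge from `u` to `v` (`u < v`) is present at time `T`. -/
def EE (u v T : ℕ) : Prop :=
  (5 ≤ u ∧ v = u + 1 ∧ T = u + 3) ∨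
  (5 ≤ u ∧ u % 2 = 1 ∧ u + 2 ≤ v ∧ T = u + v) ∨
  (u ≤ 4 ∧ u ≠ 1 ∧ 5 ≤ v ∧ v % 2 = 1 ∧ T + 3 = 2 * v + u)

def RR (a b T : ℕ) : Prop := EE a b T ∨ EE b a T

lemma RR_symm {a b T : ℕ} (h : RR a b T) : RR b a T := h.symm

lemma EE_lt {a b T : ℕ} (h : EE a b T) : a < b ∧ b ≤ T := by
  unfold EE at h; omega

lemma EE_fun {a b T T' : ℕ} (h : EE a b T) (h' : EE a b T') : T = T' := by
  unfold EE at h h'; omega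

lemma RR_fun {a b T T' : ℕ} (h : RR a b T) (h' : RR a b T') : T = T' := by
  rcases h with h | h <;> rcases h' with h' | h'
  · exact EE_fun h h'
  · have := EE_lt h; have := EE_lt h'; omega
  · have := EE_lt h; have := EE_lt h'; omega
  · exact EE_fun h h'

lemma RR_proper {a b b' T : ℕ} (h : RR a b T) (h' : RR a b' T) : b = b' := by
  rcases h with h | h <;> rcases h' with h' | h' <;> unfold EE at h h' <;> omega

/-- An odd vertex `a ≥ 5` sees every time from `2a-3` on. -/
lemma RR_univ {a T : ℕ} (ha : 5 ≤ a) (hodd : a % 2 = 1) (hT : 2 * a ≤ T + 3) :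
    ∃ x, RR a x T := by
  by_cases h1 : 2 * a + 2 ≤ T
  · exact ⟨T - a, Or.inl (by unfold EE; omega)⟩
  · by_cases h2 : T + 2 = 2 * a
    · by_cases h5 : a = 5
      · exact ⟨6, Or.inl (by unfold EE; omega)⟩
      · exact ⟨a - 2, Or.inr (by unfold EE; omega)⟩
    · exact ⟨T + 3 - 2 * a, Or.inr (by unfold EE; omega)⟩

lemma EE_cover {a b T T' : ℕ} (h : EE a b T) (hT : T < T') :
    ∃ x, RR a x T' ∨ RR b x T' := by
  rcases h with ⟨h1, h2, h3⟩ | ⟨h1, h2, h3, h4⟩ | ⟨h1, h2, h3, h4, h5⟩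
  · subst h2
    by_cases e : T' = a + 4
    · exact ⟨a + 2, Or.inr (Or.inl (by unfold EE; omega))⟩
    by_cases ho : a % 2 = 1
    · by_cases hl : 2 * a ≤ T' + 3
      · obtain ⟨x, hx⟩ := RR_univ h1 ho hl
        exact ⟨x, Or.inl hx⟩
      · by_cases hp : T' % 2 = 0
        · exact ⟨T' - a, Or.inl (Or.inr (by unfold EE; omega))⟩
        · exact ⟨T' - (a + 1), Or.inr (Or.inr (by unfold EE; omega))⟩
    · by_cases hl : 2 * (a + 1) ≤ T' + 3
      · obtain ⟨x, hx⟩ := RR_univ (a := a + 1) (by omega) (by omega) hl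
        exact ⟨x, Or.inr hx⟩
      · by_cases hp : T' % 2 = 0
        · exact ⟨T' - (a + 1), Or.inr (Or.inr (by unfold EE; omega))⟩
        · exact ⟨T' - a, Or.inl (Or.inr (by unfold EE; omega))⟩
  · obtain ⟨x, hx⟩ := RR_univ (T := T') h1 h2 (by omega)
    exact ⟨x, Or.inl hx⟩
  · obtain ⟨x, hx⟩ := RR_univ (T := T') h3 h4 (by omega)
    exact ⟨x, Or.inr hx⟩

lemma RR_cover {a b T T' : ℕ} (h : RR a b T) (hT : T < T') :
    ∃ x, RR a x T' ∨ RR b x T' := by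
  rcases h with h | h
  · exact EE_cover h hT
  · obtain ⟨x, hx⟩ := EE_cover h hT
    exact ⟨x, hx.symm⟩

lemma RR_lt {a b T : ℕ} (h : RR a b T) : a ≤ T ∧ b ≤ T ∧ a ≠ b := by
  rcases h with h | h <;> have := EE_lt h <;> omega

/-- The graph: all edges with time at most `k + 9`. -/
def GG (k : ℕ) : SimpleGraph (Fin (k + 10)) where
  Adj a b := ∃ T, T ≤ k + 9 ∧ RR a b T
  symm := ⟨fun _ _ ⟨T, h, h'⟩ => ⟨T, h, RR_symm h'⟩⟩
  loopless := ⟨fun _ ⟨_, _, h'⟩ => (RR_lt h').2.2 rfl⟩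

noncomputable def cc (k : ℕ) (e : Sym2 (Fin (k + 10))) : ℕ :=
  k + 10 - sInf {T | ∃ a b : Fin (k + 10), e = s(a, b) ∧ RR a b T}

lemma cc_eq {k : ℕ} {a b : Fin (k + 10)} {T : ℕ} (h : RR a b T) :
    cc k s(a, b) = k + 10 - T := by
  have : {T | ∃ a' b' : Fin (k + 10), s(a, b) = s(a', b') ∧ RR a' b' T} = {T} := by
    ext T'
    simp only [Set.mem_setOf_eq, Set.mem_singleton_iff]
    constructor
    · rintro ⟨a', b', he, h'⟩
      rcases Sym2.eq_iff.1 he with ⟨rfl, rfl⟩ | ⟨rfl, rfl⟩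
      · exact RR_fun h' h
      · exact RR_fun h' (RR_symm h)
    · rintro rfl
      exact ⟨a, b, rfl, h⟩
  unfold cc
  rw [this, csInf_singleton]

lemma sum_bound (N : ℕ) : ∀ k : ℕ, 8 * ∑ i ∈ Finset.range N, (k - 2 - 4 * i) ≤ k ^ 2 := by
  induction N with
  | zero => intro k; simp
  | succ N ih =>
    intro k
    rw [Finset.sum_range_succ']
    have h1 : ∑ i ∈ Finset.range N, (k - 2 - 4 * (i + 1)) =
        ∑ i ∈ Finset.range N, ((k - 4) - 2 - 4 * i) :=
      Finset.sum_congr rfl fun i _ => by omega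
    rw [h1]
    have h2 := ih (k - 4)
    by_cases hk : 4 ≤ k
    · obtain ⟨m, rfl⟩ := Nat.exists_eq_add_of_le hk
      have : 4 + m - 4 = m := by omega
      rw [this] at h2 ⊢
      have : 4 + m - 2 - 4 * 0 = m + 2 := by omega
      rw [this]
      nlinarith
    · have : k - 4 = 0 := by omega
      rw [this] at h2 ⊢
      have h3 : k ≤ 3 := by omega
      interval_cases k <;> simp_all

/-- A finite set of pairs containing all oriented edges. -/
def PP (k : ℕ) : Finset (ℕ × ℕ) :=
  (Finset.Ico 5 (k + 7)).image (fun u => (u, u + 1)) ∪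
  ((Finset.range (k + 10)).sigma
    (fun i => Finset.Ico (2 * i + 7) (k + 5 - 2 * i))).image (fun p => (2 * p.1 + 5, p.2)) ∪
  (({0, 2, 3, 4} : Finset ℕ) ×ˢ Finset.range ((k + 2) / 4 + 1)).image
    (fun p => (p.1, 2 * p.2 + 5))

lemma PP_card (k : ℕ) : 8 * (PP k).card ≤ k ^ 2 + 16 * k + 64 := by
  have h1 : ((Finset.Ico 5 (k + 7)).image (fun u => (u, u + 1))).card ≤ k + 2 :=
    Finset.card_image_le.trans (by simp)
  have h2 : (((Finset.range (k + 10)).sigma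
    (fun i => Finset.Ico (2 * i + 7) (k + 5 - 2 * i))).image
      (fun p => (2 * p.1 + 5, p.2))).card ≤ ∑ i ∈ Finset.range (k + 10), (k - 2 - 4 * i) := by
    refine Finset.card_image_le.trans ?_
    rw [Finset.card_sigma]
    refine Finset.sum_le_sum fun i _ => ?_
    rw [Nat.card_Ico]; omega
  have h3 : ((({0, 2, 3, 4} : Finset ℕ) ×ˢ Finset.range ((k + 2) / 4 + 1)).image
    (fun p => (p.1, 2 * p.2 + 5))).card ≤ 4 * ((k + 2) / 4 + 1) := by
    refine Finset.card_image_le.trans ?_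
    rw [Finset.card_product, Finset.card_range]
    exact le_of_eq rfl
  have h4 := sum_bound (k + 10) k
  have h5 : (PP k).card ≤ _ := (Finset.card_union_le _ _).trans
    (Nat.add_le_add_right (Finset.card_union_le _ _) _)
  omega

lemma EE_mem {k u v T : ℕ} (h : EE u v T) (hT : T ≤ k + 9) : (u, v) ∈ PP k := by
  unfold PP
  simp only [Finset.mem_union, Finset.mem_image, Finset.mem_sigma, Finset.mem_product,
    Finset.mem_Ico, Finset.mem_range, Prod.mk.injEq, Prod.exists, Sigma.exists,
    Finset.mem_insert, Finset.mem_singleton]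
  rcases h with h | h | h
  · exact Or.inl (Or.inl ⟨u, by omega⟩)
  · exact Or.inl (Or.inr ⟨(u - 5) / 2, v, by omega⟩)
  · exact Or.inr ⟨u, (v - 5) / 2, by omega⟩

lemma edge_card (k : ℕ) : (GG k).edgeSet.ncard ≤ (PP k).card := by
  rw [← Set.ncard_coe_finset]
  have : Sym2.map (fun x : Fin (k + 10) => (x : ℕ)) '' (GG k).edgeSet ⊆
      (fun p : ℕ × ℕ => s(p.1, p.2)) '' (PP k : Set (ℕ × ℕ)) := by
    rintro _ ⟨e, he, rfl⟩
    induction e with | _ a b =>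
    obtain ⟨T, hT, h | h⟩ := he
    · exact ⟨_, EE_mem h hT, rfl⟩
    · exact ⟨_, EE_mem h hT, Sym2.eq_swap⟩
  rw [← Set.ncard_image_of_injective _ (Sym2.map.injective Fin.val_injective)]
  exact (Set.ncard_le_ncard this (Set.toFinite _)).trans (Set.ncard_image_le (Set.toFinite _))

lemma cyc_adj {k : ℕ} (hk : 3 ≤ k) {u v : Fin k} (h : (cycleGraph k).Adj u v) :
    (u.val + 1 = v.val ∨ (u.val = 0 ∧ v.val + 1 = k)) ∨
    (v.val + 1 = u.val ∨ (v.val = 0 ∧ u.val + 1 = k)) := by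
  rw [cycleGraph_adj'] at h
  have hu := u.2
  have hv := v.2
  simp only [Fin.sub_def] at h
  rcases h with h | h
  · by_cases hl : v.val ≤ u.val
    · rw [show k - v.val + u.val = (u.val - v.val) + k by omega, Nat.add_mod_right,
        Nat.mod_eq_of_lt (by omega)] at h
      omega
    · rw [Nat.mod_eq_of_lt (by omega)] at h
      omega
  · by_cases hl : u.val ≤ v.val
    · rw [show k - u.val + v.val = (v.val - u.val) + k by omega, Nat.add_mod_right,
        Nat.mod_eq_of_lt (by omega)] at h
      omega
    · rw [Nat.mod_eq_of_lt (by omega)] at h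
      omega

lemma cyc_time {k u v : ℕ} (hk : 3 ≤ k) (hv : v < k)
    (h : u + 1 = v ∨ (u = 0 ∧ v + 1 = k)) :
    EE (u + 5) (v + 5) (if u + 1 = v then u + 8 else k + 9) := by
  unfold EE
  split_ifs <;> omega

lemma cyc_edge {k : ℕ} (hk : 3 ≤ k) {e : Sym2 (Fin k)} (h : e ∈ (cycleGraph k).edgeSet) :
    ∃ u v : Fin k, e = s(u, v) ∧ (u.val + 1 = v.val ∨ (u.val = 0 ∧ v.val + 1 = k)) := by
  induction e with | _ a b =>
  rcases cyc_adj hk h with h | h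
  · exact ⟨a, b, rfl, h⟩
  · exact ⟨b, a, Sym2.eq_swap, h⟩

theorem GG_good (k : ℕ) (hk : 3 ≤ k) : IsHGoodColoring (cycleGraph k) (GG k) (cc k) := by
  refine ⟨?_, ?_, ?_, ?_⟩
  · rintro e₁ h₁ e₂ h₂ hne ⟨v, hv₁, hv₂⟩ hc
    obtain ⟨x, rfl⟩ := hv₁
    obtain ⟨y, rfl⟩ := hv₂
    obtain ⟨T, hT, h⟩ := h₁
    obtain ⟨T', hT', h'⟩ := h₂
    rw [cc_eq h, cc_eq h'] at hc
    have : T = T' := by omega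
    subst this
    have : x = y := Fin.ext (RR_proper h h')
    exact hne (by rw [this])
  · intro e he
    induction e with | _ a b =>
    obtain ⟨T, hT, h⟩ := he
    rw [cc_eq h]; omega
  · let f : Fin k → Fin (k + 10) := fun i => ⟨i.val + 5, by omega⟩
    have hadj : ∀ u v : Fin k, (u.val + 1 = v.val ∨ (u.val = 0 ∧ v.val + 1 = k)) →
        (GG k).Adj (f u) (f v) := fun u v h =>
      ⟨_, by split_ifs <;> omega, Or.inl (cyc_time hk v.2 h)⟩
    refine ⟨⟨f, ?_⟩, ?_, ?_⟩
    · intro u v h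
      rcases cyc_adj hk h with h | h
      · exact hadj u v h
      · exact (hadj v u h).symm
    · intro u v h
      have : u.val + 5 = v.val + 5 := congrArg Fin.val h
      exact Fin.ext (by omega)
    · intro e₁ h₁ e₂ h₂ hc
      obtain ⟨u, v, rfl, h⟩ := cyc_edge hk h₁
      obtain ⟨u', v', rfl, h'⟩ := cyc_edge hk h₂
      have e1 : cc k s(f u, f v) = _ := cc_eq (Or.inl (cyc_time hk v.2 h))
      have e2 : cc k s(f u', f v') = _ := cc_eq (Or.inl (cyc_time hk v'.2 h'))
      have hc' : cc k s(f u, f v) = cc k s(f u', f v') := hc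
      rw [e1, e2] at hc'
      have : u.val = u'.val ∧ v.val = v'.val := by
        split_ifs at hc' <;> omega
      rw [Fin.ext this.1, Fin.ext this.2]
  · intro e he j hj hjc
    induction e with | _ a b =>
    obtain ⟨T, hT, h⟩ := he
    rw [cc_eq h] at hjc
    obtain ⟨x, hx⟩ := RR_cover h (T' := k + 10 - j) (by omega)
    have key : ∀ w : Fin (k + 10), RR w x (k + 10 - j) → ∃ e' ∈ (GG k).edgeSet,
        cc k e' = j ∧ w ∈ e' := by
      intro w hw
      have hxlt := (RR_lt hw).2.1
      let x' : Fin (k + 10) := ⟨x, by omega⟩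
      have hw' : RR w x' (k + 10 - j) := hw
      refine ⟨s(w, x'), ⟨_, by omega, hw'⟩, ?_, Sym2.mem_mk_left _ _⟩
      rw [cc_eq hw']; omega
    rcases hx with hx | hx
    · obtain ⟨e', h1, h2, h3⟩ := key a hx
      exact ⟨e', h1, h2, a, Sym2.mem_mk_left _ _, h3⟩
    · obtain ⟨e', h1, h2, h3⟩ := key b hx
      exact ⟨e', h1, h2, b, Sym2.mem_mk_right _ _, h3⟩

theorem stmt_16 (k : ℕ) (hk : 3 ≤ k) :
    ∃ (n : ℕ) (G : SimpleGraph (Fin n)), HGood (SimpleGraph.cycleGraph k) G ∧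
      (G.edgeSet.ncard : ℝ) ≤ (k : ℝ) ^ 2 / 8 + 7 * k := by
  refine ⟨k + 10, GG k, ⟨cc k, GG_good k hk⟩, ?_⟩
  have h1 := edge_card k
  have h2 := PP_card k
  have h3 : 8 * (GG k).edgeSet.ncard ≤ k ^ 2 + 56 * k := by omega
  have h4 : (8 : ℝ) * ((GG k).edgeSet.ncard : ℝ) ≤ (k : ℝ) ^ 2 + 56 * k := by exact_mod_cast h3
  linarith
end

section
/- For every ε > 0 there exists n₀ such that for all n ≥ n₀, every K_n-good graph has at least (1−ε)·n³/6 edges, where K_n denotes the complete graph on n vertices. -/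
open SimpleGraph

open Classical in
/-- The key bound on each colour class. -/
lemma class_bound {V : Type} [Fintype V] (G : SimpleGraph V) (n : ℕ) (c : Sym2 V → ℕ)
    (hc : IsHGoodColoring (⊤ : SimpleGraph (Fin n)) G c) (j k : ℕ) (hj : 1 ≤ j)
    (hjk : j < (k + 1).choose 2) :
    n ≤ (G.edgeFinset.filter (fun e => c e = j)).card + 1 + k := by
  obtain ⟨-, hpos, ⟨f, hf, hr⟩, hg⟩ := hc
  have hr' : ∀ a b x y : Fin n, a ≠ b → x ≠ y → c s(f a, f b) = c s(f x, f y) →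
      s(a, b) = s(x, y) := by
    intro a b x y hab hxy h
    exact hr s(a, b) (by simpa using hab) s(x, y) (by simpa using hxy) (by simpa using h)
  have hadj : ∀ a b : Fin n, a ≠ b → s(f a, f b) ∈ G.edgeSet := by
    intro a b hab
    exact f.map_adj (by simpa using hab)
  set F := G.edgeFinset.filter (fun e => c e = j) with hF
  set S : Finset (Fin n) := Finset.univ.filter (fun x => ∃ e ∈ F, f x ∈ e) with hS
  have hST : S.card + Sᶜ.card = n := by simpa using Finset.card_add_card_compl S
  have hT : Sᶜ.card ≤ k := by
    have h1 : (Sᶜ.card).choose 2 ≤ j := by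
      rw [← Sym2.card_image_offDiag]
      have : (Finset.Icc 1 j).card = j := by simp
      rw [← this]
      apply Finset.card_le_card_of_injOn (fun e => c (Sym2.map f e))
      · intro e he
        simp only [Finset.coe_image, Set.mem_image, Finset.mem_coe, Finset.mem_offDiag] at he
        obtain ⟨⟨a, b⟩, ⟨ha, hb, hab⟩, rfl⟩ := he
        have hE := hadj a b hab
        simp only [Finset.coe_Icc, Set.mem_Icc]
        refine ⟨hpos _ hE, ?_⟩
        by_contra hlt
        obtain ⟨e', he', hce', v, hv, hv'⟩ := hg _ hE j hj (not_le.mp hlt)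
        have hF' : e' ∈ F := by simp [hF, he', hce']
        rcases Sym2.mem_iff.mp hv with rfl | rfl
        · exact (Finset.mem_compl.mp ha) (by simp only [hS, Finset.mem_filter_univ]; exact ⟨e', hF', hv'⟩)
        · exact (Finset.mem_compl.mp hb) (by simp only [hS, Finset.mem_filter_univ]; exact ⟨e', hF', hv'⟩)
      · intro e he e' he' h
        simp only [Finset.coe_image, Set.mem_image, Finset.mem_coe, Finset.mem_offDiag] at he he'
        obtain ⟨⟨a, b⟩, ⟨ha, hb, hab⟩, rfl⟩ := he
        obtain ⟨⟨x, y⟩, ⟨hx, hy, hxy⟩, rfl⟩ := he'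
        exact hr' a b x y hab hxy h
    by_contra hlt
    have := Nat.choose_le_choose 2 (show k + 1 ≤ Sᶜ.card by omega)
    omega
  have hSF : S.card ≤ F.card + 1 := by
    have hex : ∀ x : Fin n, ∃ e : Sym2 V, x ∈ S → e ∈ F ∧ f x ∈ e := by
      intro x
      by_cases hx : x ∈ S
      · obtain ⟨e, he⟩ := (Finset.mem_filter.mp hx).2
        exact ⟨e, fun _ => he⟩
      · exact ⟨s(f x, f x), fun h => absurd h hx⟩
    choose g hgS using hex
    have key : ∀ x ∈ S, ∀ y ∈ S, x ≠ y → g x = g y → c s(f x, f y) = j := by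
      intro x hx y hy hxy h
      have h1 := hgS x hx
      have h2 := hgS y hy
      rw [← h] at h2
      have : g x = s(f x, f y) :=
        (Sym2.mem_and_mem_iff (fun h => hxy (hf h))).mp ⟨h1.2, h2.2⟩
      rw [← this]
      exact (Finset.mem_filter.mp h1.1).2
    by_cases hinj : Set.InjOn g S
    · have := Finset.card_le_card_of_injOn g (t := F) (fun x hx => (hgS x hx).1) hinj
      omega
    · simp only [Set.InjOn, not_forall] at hinj
      obtain ⟨a, ha, b, hb, hab, hne⟩ := hinj
      have hab' := key a ha b hb hne hab
      have : (S.erase a).card ≤ F.card := by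
        apply Finset.card_le_card_of_injOn g
        · intro x hx
          exact (hgS x (Finset.mem_of_mem_erase hx)).1
        · intro x hx y hy h
          by_contra hxy
          have hx' := Finset.mem_erase.mp hx
          have hy' := Finset.mem_erase.mp hy
          have h1 := key x hx'.2 y hy'.2 hxy h
          have h2 := hr' a b x y hne hxy (hab'.trans h1.symm)
          have h3 : a ∈ s(x, y) := h2 ▸ Sym2.mem_mk_left a b
          rcases Sym2.mem_iff.mp h3 with h4 | h4
          · exact hx'.1 h4.symm
          · exact hy'.1 h4.symm
      rw [Finset.card_erase_of_mem ha] at this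
      omega
  omega

/-- Summation of the colour class bounds. -/
lemma sum_bound_s18 (n : ℕ) (g : ℕ → ℕ)
    (h : ∀ j k, 1 ≤ j → j < (k + 1).choose 2 → n ≤ g j + 1 + k) (m : ℕ) (hm : 2 ≤ m) :
    ((n : ℝ) - 1) * (m * (m - 1) / 2) - (m - 1) * m * (2 * m - 1) / 6 - n ≤
      ∑ j ∈ Finset.range (m.choose 2), (g j : ℝ) := by
  induction m, hm using Nat.le_induction with
  | base =>
    have : (0 : ℝ) ≤ ∑ j ∈ Finset.range (Nat.choose 2 2), (g j : ℝ) :=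
      Finset.sum_nonneg (fun _ _ => by positivity)
    push_cast
    linarith
  | succ m hm ih =>
    have e : (m + 1).choose 2 = m.choose 2 + m := by
      rw [Nat.choose_succ_succ' m 1]; simp; ring
    rw [e, Finset.sum_range_add]
    have : (m : ℝ) * ((n : ℝ) - 1 - m) ≤ ∑ x ∈ Finset.range m, (g (m.choose 2 + x) : ℝ) := by
      have := Finset.card_nsmul_le_sum (Finset.range m)
        (fun x => (g (m.choose 2 + x) : ℝ)) ((n : ℝ) - 1 - m) (by
          intro x hx
          have hx := Finset.mem_range.mp hx
          have h1 : 0 < m.choose 2 := Nat.choose_pos hm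
          have h2 := h (m.choose 2 + x) m (by omega) (by omega)
          have h3 : (n : ℝ) ≤ g (m.choose 2 + x) + 1 + m := by exact_mod_cast h2
          linarith)
      simpa using this
    push_cast
    linarith

theorem stmt_18 (ε : ℝ) (hε : 0 < ε) :
    ∃ n₀ : ℕ, ∀ n : ℕ, n₀ ≤ n →
      ∀ (V : Type) [Fintype V] (G : SimpleGraph V),
        HGood (⊤ : SimpleGraph (Fin n)) G →
        (1 - ε) * (n : ℝ) ^ 3 / 6 ≤ (G.edgeSet.ncard : ℝ) := by
  classical
  refine ⟨⌈7 / ε⌉₊ + 2, fun n hn V _ G ⟨c, hc⟩ => ?_⟩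
  have h1 := sum_bound_s18 n (fun j => (G.edgeFinset.filter (fun e => c e = j)).card)
    (fun j k hj hjk => by
      have := class_bound G n c hc j k hj hjk
      convert this) n (by omega)
  have h2 : ∑ j ∈ Finset.range (n.choose 2), (G.edgeFinset.filter (fun e => c e = j)).card
      ≤ G.edgeFinset.card := by
    rw [← Finset.card_biUnion]
    · apply Finset.card_le_card
      intro e he
      simp only [Finset.mem_biUnion, Finset.mem_filter] at he
      obtain ⟨_, _, h, _⟩ := he
      exact h
    · intro i _ j _ hij
      rw [Function.onFun, Finset.disjoint_left]
      intro e he he'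
      exact hij ((Finset.mem_filter.mp he).2.symm.trans (Finset.mem_filter.mp he').2)
  have h3 : G.edgeSet.ncard = G.edgeFinset.card := by
    rw [← SimpleGraph.coe_edgeFinset, Set.ncard_coe_finset]
  rw [h3]
  have h4 : (∑ j ∈ Finset.range (n.choose 2),
      ((G.edgeFinset.filter (fun e => c e = j)).card : ℝ)) ≤ G.edgeFinset.card := by
    exact_mod_cast h2
  have h5 : 7 / ε ≤ n := (Nat.le_ceil _).trans (by exact_mod_cast (by omega))
  have h6 : 7 ≤ n * ε := (div_le_iff₀ hε).mp h5
  have h7 : (1 : ℝ) ≤ n := by exact_mod_cast (by omega : 1 ≤ n)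
  have h8 : 7 * (n : ℝ) ^ 2 ≤ n * ε * (n : ℝ) ^ 2 := by gcongr
  have h9 := h1.trans h4
  nlinarith
end

section
/- For every ε > 0 there exists n₀ such that for all n ≥ n₀ there exists a K_n-good graph with at most (1+ε)·n³/6 edges, where K_n denotes the complete graph on n vertices. -/
open SimpleGraph

lemma ch2 (k : ℕ) : (k+1).choose 2 = k.choose 2 + k := by
  rw [Nat.choose_succ_succ' k 1]; simp; omega

abbrev EdgeIx (n : ℕ) := Σ k : Fin n, Fin ((k.val+1).choose 2)

lemma card_EdgeIx (n : ℕ) : 6 * Fintype.card (EdgeIx n) ≤ n ^ 3 := by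
  rw [Fintype.card_sigma]
  simp only [Fintype.card_fin]
  rw [Fin.sum_univ_eq_sum_range (fun k => (k+1).choose 2) n]
  have key : ∀ n : ℕ, 6 * ∑ k ∈ Finset.range n, (k+1).choose 2 + n = n ^ 3 := by
    intro n
    induction n with
    | zero => simp
    | succ k ih =>
      rw [Finset.sum_range_succ]
      have h2 : (k+1).choose 2 * 2 = (k+1) * k := by
        have := Nat.triangle_succ k
        rw [Nat.choose_two_right]
        exact Nat.div_mul_cancel (by simpa using (Nat.even_mul_pred_self (k+1)).two_dvd)
      nlinarith
  have := key n
  omega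

/-- The far endpoint of the edge with owner `k` and colour `i+1`. -/
def farEnd {n m : ℕ} (a : Fin n → Fin m) (b : EdgeIx n → Fin m) (e : EdgeIx n) : Fin m :=
  if h : e.2.val < e.1.val.choose 2 then b e
  else a ⟨e.2.val - e.1.val.choose 2, by
    have := e.2.isLt; have := e.1.isLt; have := ch2 e.1.val; omega⟩

def edgeOf {n m : ℕ} (a : Fin n → Fin m) (b : EdgeIx n → Fin m) (e : EdgeIx n) : Sym2 (Fin m) :=
  s(a e.1, farEnd a b e)

section
variable {n m : ℕ} (a : Fin n → Fin m) (b : EdgeIx n → Fin m)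

lemma farEnd_a (ha : a.Injective) (hab : ∀ x y, a x ≠ b y) (e : EdgeIx n) (x : Fin n)
    (h : a x = farEnd a b e) : x.val < e.1.val ∧ e.2.val = e.1.val.choose 2 + x.val := by
  unfold farEnd at h
  split_ifs at h with h1
  · exact absurd h (hab _ _)
  · have := ha h
    subst this
    have := e.2.isLt; have := ch2 e.1.val
    simp only
    omega

lemma color_owner (ha : a.Injective) (hb : b.Injective) (hab : ∀ x y, a x ≠ b y)
    (e f : EdgeIx n) (hc : e.2.val = f.2.val) (hv : ∃ v, v ∈ edgeOf a b e ∧ v ∈ edgeOf a b f) :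
    e = f := by
  have aux : ∀ e f : EdgeIx n, e.2.val = f.2.val → e.1.val < f.1.val →
      (∃ v, v ∈ edgeOf a b e ∧ v ∈ edgeOf a b f) → False := by
    rintro e f hc hlt ⟨v, h1, h2⟩
    have hm : (e.1.val+1).choose 2 ≤ f.1.val.choose 2 := Nat.choose_le_choose 2 hlt
    have hf : farEnd a b f = b f := by
      unfold farEnd; rw [dif_pos]; have := e.2.isLt; omega
    simp only [edgeOf, Sym2.mem_iff, hf] at h1 h2
    rcases h2 with rfl | rfl
    · rcases h1 with h1 | h1
      · have := ha h1; rw [this] at hlt; omega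
      · have := (farEnd_a a b ha hab e _ h1).1; omega
    · rcases h1 with h1 | h1
      · exact hab _ _ h1.symm
      · unfold farEnd at h1
        split_ifs at h1
        · have := hb h1; rw [this] at hlt; omega
        · exact hab _ _ h1.symm
  rcases lt_trichotomy e.1.val f.1.val with h | h | h
  · exact (aux e f hc h hv).elim
  · obtain ⟨k, i⟩ := e
    obtain ⟨k', i'⟩ := f
    have : k = k' := Fin.ext h
    subst this
    have : i = i' := Fin.ext hc
    rw [this]
  · obtain ⟨v, h1, h2⟩ := hv
    exact (aux f e hc.symm h ⟨v, h2, h1⟩).elim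

lemma edgeOf_ne (ha : a.Injective) (hab : ∀ x y, a x ≠ b y) (e : EdgeIx n) :
    a e.1 ≠ farEnd a b e := by
  intro h
  have := (farEnd_a a b ha hab e _ h).1
  omega

lemma edgeOf_inj (ha : a.Injective) (hb : b.Injective) (hab : ∀ x y, a x ≠ b y) :
    (edgeOf a b).Injective := by
  intro e f h
  have key : e.1 = f.1 := by
    unfold edgeOf at h
    rw [Sym2.eq_iff] at h
    rcases h with h | h
    · exact ha h.1
    · have h1 := (farEnd_a a b ha hab _ _ h.1).1
      have h2 := (farEnd_a a b ha hab _ _ h.2.symm).1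
      omega
  obtain ⟨k, i⟩ := e
  obtain ⟨k', i'⟩ := f
  simp only at key
  subst key
  have h3 : farEnd a b ⟨k, i⟩ = farEnd a b ⟨k, i'⟩ := by
    exact Sym2.congr_right.mp h
  unfold farEnd at h3
  split_ifs at h3 with h1 h2 h2
  · exact hb h3
  · exact absurd h3.symm (hab _ _)
  · exact absurd h3 (hab _ _)
  · have := ha h3
    simp only [Fin.mk.injEq] at this h1 h2
    have : i = i' := Fin.ext (by omega)
    rw [this]

lemma main_good (ha : a.Injective) (hb : b.Injective) (hab : ∀ x y, a x ≠ b y) :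
    ∃ G : SimpleGraph (Fin m), HGood (⊤ : SimpleGraph (Fin n)) G ∧
      G.edgeSet = Set.range (edgeOf a b) := by
  have hE : (SimpleGraph.fromEdgeSet (Set.range (edgeOf a b))).edgeSet
      = Set.range (edgeOf a b) := by
    rw [SimpleGraph.edgeSet_fromEdgeSet]
    ext e
    simp only [Set.mem_sdiff, and_iff_left_iff_imp]
    rintro ⟨x, rfl⟩
    simpa [edgeOf] using edgeOf_ne a b ha hab x
  have hinj := edgeOf_inj a b ha hb hab
  have hcol : ∀ e, Function.extend (edgeOf a b) (fun e => e.2.val + 1) (fun _ => 0) (edgeOf a b e)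
      = e.2.val + 1 := fun e => hinj.extend_apply _ _ e
  have hK : ∀ x y : Fin n, x.val < y.val →
      ∃ e : EdgeIx n, e.1 = y ∧ e.2.val = y.val.choose 2 + x.val ∧ edgeOf a b e = s(a x, a y) := by
    intro x y h
    have := ch2 y.val
    refine ⟨⟨y, ⟨y.val.choose 2 + x.val, by omega⟩⟩, rfl, rfl, ?_⟩
    simp [edgeOf, farEnd, Sym2.eq_swap]
  have hK' : ∀ s ∈ (⊤ : SimpleGraph (Fin n)).edgeSet, ∃ x y : Fin n, x.val < y.val ∧ s = s(x, y) := by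
    intro s
    induction s using Sym2.ind with
    | _ x y =>
      intro h
      have h : x ≠ y := by simpa using h
      rcases lt_or_gt_of_ne h with h | h
      · exact ⟨x, y, h, rfl⟩
      · exact ⟨y, x, h, Sym2.eq_swap⟩
  refine ⟨SimpleGraph.fromEdgeSet (Set.range (edgeOf a b)),
    ⟨Function.extend (edgeOf a b) (fun e => e.2.val + 1) (fun _ => 0), ?_, ?_, ?_, ?_⟩, hE⟩
  · unfold IsProperEdgeColoring
    rw [hE]
    rintro _ ⟨e, rfl⟩ _ ⟨f, rfl⟩ hne hv hc
    rw [hcol, hcol] at hc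
    exact hne (congrArg _ (color_owner a b ha hb hab e f (by omega) hv))
  · rw [hE]
    rintro _ ⟨e, rfl⟩
    rw [hcol]; omega
  · refine ⟨⟨a, ?_⟩, ha, ?_⟩
    · intro x y h
      rw [← SimpleGraph.mem_edgeSet, hE]
      have h : x ≠ y := by simpa using h
      rcases lt_or_gt_of_ne h with h | h
      · obtain ⟨e, -, -, he⟩ := hK x y h
        exact ⟨e, he⟩
      · obtain ⟨e, -, -, he⟩ := hK y x h
        exact ⟨e, by rw [he, Sym2.eq_swap]⟩
    · intro s hs t ht hc
      obtain ⟨x, y, hxy, rfl⟩ := hK' s hs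
      obtain ⟨x', y', hxy', rfl⟩ := hK' t ht
      obtain ⟨e, h1, h2, h3⟩ := hK x y hxy
      obtain ⟨f, h1', h2', h3'⟩ := hK x' y' hxy'
      simp only [Sym2.map_mk, RelHom.coeFn_mk] at hc
      change Function.extend _ _ _ s(a x, a y) = Function.extend _ _ _ s(a x', a y') at hc
      rw [← h3, ← h3', hcol, hcol] at hc
      have c1 := ch2 y.val
      have c2 := ch2 y'.val
      have hy : y.val = y'.val := by
        rcases lt_trichotomy y.val y'.val with h | h | h
        · have hm : (y.val+1).choose 2 ≤ y'.val.choose 2 := Nat.choose_le_choose 2 h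
          omega
        · exact h
        · have hm : (y'.val+1).choose 2 ≤ y.val.choose 2 := Nat.choose_le_choose 2 h
          omega
      rw [hy] at h2
      have hx : x = x' := Fin.ext (by omega)
      rw [hx, Fin.ext hy]
  · rw [hE]
    rintro _ ⟨⟨k, i⟩, rfl⟩ j hj hlt
    rw [hcol] at hlt
    simp only at hlt
    have := i.isLt
    refine ⟨_, ⟨⟨k, ⟨j - 1, by omega⟩⟩, rfl⟩, ?_, a k, ?_, ?_⟩
    · rw [hcol]; simp only; omega
    · simp [edgeOf]
    · simp [edgeOf]

end

theorem stmt_19 (ε : ℝ) (hε : 0 < ε) :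
    ∃ n₀ : ℕ, ∀ n : ℕ, n₀ ≤ n →
      ∃ (m : ℕ) (G : SimpleGraph (Fin m)), HGood (⊤ : SimpleGraph (Fin n)) G ∧
        (G.edgeSet.ncard : ℝ) ≤ (1 + ε) * (n : ℝ) ^ 3 / 6 := by
  refine ⟨0, fun n _ => ?_⟩
  let φ := Fintype.equivFin (Fin n ⊕ EdgeIx n)
  obtain ⟨G, hG, hE⟩ := main_good (fun x => φ (Sum.inl x)) (fun x => φ (Sum.inr x))
    (fun x y h => by simpa using h) (fun x y h => Sum.inr_injective (φ.injective h))
    (fun x y h => by simpa using h)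
  refine ⟨_, G, hG, ?_⟩
  have h1 : G.edgeSet.ncard ≤ Fintype.card (EdgeIx n) := by
    rw [hE, ← Set.image_univ]
    refine (Set.ncard_image_le Set.finite_univ).trans ?_
    rw [Set.ncard_univ, Nat.card_eq_fintype_card]
  have h2 := card_EdgeIx n
  have h3 : 6 * G.edgeSet.ncard ≤ n ^ 3 := by omega
  have h4 : (6 : ℝ) * G.edgeSet.ncard ≤ (n : ℝ) ^ 3 := by exact_mod_cast h3
  have h5 : 0 ≤ ε * (n : ℝ) ^ 3 := by positivity
  linarith
end
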